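/- Let φ be a strongly monotone continuous semiflow on a metric space X (setting as in the context), with all orbits precompact and ≪ quasi-closed. If x ≤ y with x ≠ y, then either ω(x) ≪ ω(y) (pointwise), or ω(x) = ω(y) and every point of this common limit set is an equilibrium. -/

import Mathlib

open Filter Topology

namespace LSD

/-- The setting, with the order as a plain relation so that it can be dualized. -/
structure Setup {X : Type*} [MetricSpace X] (le lt : X → X → Prop) (φ : ℝ → X → X) : Prop where
  refl : ∀ a, le a a
  antisymm : ∀ a b, le a b → le b a → a = b
  trans : ∀ a b c, le a b → le b c → le a c
  closed : IsClosed {q : X × X | le q.1 q.2}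
  lt_le : ∀ a b, lt a b → le a b
  isOpen : IsOpen {q : X × X | lt q.1 q.2}
  cont : Continuous fun q : ℝ × X => φ q.1 q.2
  zero : ∀ x, φ 0 x = x
  add : ∀ s t : ℝ, 0 ≤ s → 0 ≤ t → ∀ x, φ (s + t) x = φ s (φ t x)
  mono : ∀ x y : X, le x y → x ≠ y → ∀ t : ℝ, 0 < t → lt (φ t x) (φ t y)
  compact : ∀ z : X, IsCompact (closure {w | ∃ t : ℝ, 0 ≤ t ∧ φ t z = w})

/-- Omega limit relation. -/
def om {X : Type*} [MetricSpace X] (φ : ℝ → X → X) (z p : X) : Prop :=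
  MapClusterPt p atTop (fun t : ℝ => φ t z)

variable {X : Type*} [MetricSpace X] {le lt : X → X → Prop} {φ : ℝ → X → X}

theorem om_iff {z p : X} : om φ z p ↔
    ∃ F : Ultrafilter ℝ, (F : Filter ℝ) ≤ atTop ∧ Tendsto (fun t => φ t z) F (𝓝 p) :=
  mapClusterPt_iff_ultrafilter

theorem om_freq {z p : X} (h : om φ z p) {U : Set X} (hU : U ∈ 𝓝 p) (s : ℝ) :
    ∃ t, s ≤ t ∧ φ t z ∈ U := by
  have h1 := (mapClusterPt_iff_frequently.1 h) U hU
  obtain ⟨t, ht, h2⟩ := (frequently_atTop.1 h1) s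
  exact ⟨t, ht, h2⟩

theorem om_closed (z : X) : IsClosed {p | om φ z p} := isClosed_setOfPred_clusterPt

namespace Setup

theorem dual (S : Setup le lt φ) : Setup (fun a b => le b a) (fun a b => lt b a) φ where
  refl := S.refl
  antisymm a b h1 h2 := S.antisymm a b h2 h1
  trans a b c h1 h2 := S.trans c b a h2 h1
  closed := S.closed.preimage continuous_swap
  lt_le a b h := S.lt_le b a h
  isOpen := S.isOpen.preimage continuous_swap
  cont := S.cont
  zero := S.zero
  add := S.add
  mono x y h hn t ht := S.mono y x h hn.symm t ht
  compact := S.compact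

theorem cont_t (S : Setup le lt φ) (t : ℝ) : Continuous (φ t) :=
  S.cont.comp (by fun_prop : Continuous fun x : X => (t, x))

theorem cont_x (S : Setup le lt φ) (x : X) : Continuous (fun t => φ t x) :=
  S.cont.comp (by fun_prop : Continuous fun t : ℝ => (t, x))

theorem wmono (S : Setup le lt φ) {x y : X} (h : le x y) {t : ℝ} (ht : 0 ≤ t) :
    le (φ t x) (φ t y) := by
  rcases eq_or_ne x y with rfl | hn
  · exact S.refl _
  rcases ht.eq_or_lt with rfl | h0
  · rwa [S.zero, S.zero]
  · exact S.lt_le _ _ (S.mono x y h hn t h0)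

theorem le_lim (S : Setup le lt φ) {ι : Type*} {F : Filter ι} [F.NeBot] {f g : ι → X} {a b : X}
    (hf : Tendsto f F (𝓝 a)) (hg : Tendsto g F (𝓝 b)) (h : ∀ᶠ i in F, le (f i) (g i)) :
    le a b :=
  S.closed.mem_of_tendsto (hf.prodMk_nhds hg) h

theorem exists_lim (S : Setup le lt φ) (z : X) {ι : Type*} (F : Ultrafilter ι) (g : ι → ℝ)
    (hg : Tendsto g F atTop) : ∃ p, Tendsto (fun i => φ (g i) z) F (𝓝 p) := by
  have h1 : ((F.map (fun i => φ (g i) z) : Ultrafilter X) : Filter X) ≤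
      𝓟 (closure {w | ∃ t : ℝ, 0 ≤ t ∧ φ t z = w}) := by
    rw [le_principal_iff]
    have : ∀ᶠ i in (F : Filter ι), 0 ≤ g i := hg.eventually_ge_atTop 0
    change ∀ᶠ i in (F : Filter ι), φ (g i) z ∈ closure {w | ∃ t : ℝ, 0 ≤ t ∧ φ t z = w}
    filter_upwards [this] with i hi
    exact subset_closure ⟨_, hi, rfl⟩
  obtain ⟨p, -, hp⟩ := (S.compact z).ultrafilter_le_nhds _ h1
  exact ⟨p, hp⟩

theorem om_of_tendsto {z p : X} {ι : Type*} {F : Filter ι} [F.NeBot] {g : ι → ℝ}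
    (hg : Tendsto g F atTop) (h : Tendsto (fun i => φ (g i) z) F (𝓝 p)) : om φ z p :=
  MapClusterPt.of_comp hg h.mapClusterPt

theorem om_exists (S : Setup le lt φ) (z : X) : ∃ p, om φ z p := by
  obtain ⟨p, hp⟩ := S.exists_lim z (Ultrafilter.of (atTop : Filter ℝ)) id (Ultrafilter.of_le _)
  exact ⟨p, om_of_tendsto (g := id) (Ultrafilter.of_le _) hp⟩

theorem om_fwd (S : Setup le lt φ) {z p : X} (h : om φ z p) {s : ℝ} (hs : 0 ≤ s) :
    om φ z (φ s p) := by
  obtain ⟨F, hF, hp⟩ := om_iff.1 h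
  refine om_of_tendsto (F := (F : Filter ℝ)) (g := fun t => s + t)
    ((tendsto_atTop_add_const_left _ s tendsto_id).mono_left hF) ?_
  refine (((S.cont_t s).tendsto p).comp hp).congr' ?_
  filter_upwards [hF (eventually_ge_atTop 0)] with t ht
  exact (S.add s t hs ht z).symm

theorem om_bwd (S : Setup le lt φ) {z p : X} (h : om φ z p) {s : ℝ} (hs : 0 ≤ s) :
    ∃ p', om φ z p' ∧ φ s p' = p := by
  obtain ⟨F, hF, hp⟩ := om_iff.1 h
  have hg : Tendsto (fun t => -s + t) (F : Filter ℝ) atTop :=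
    (tendsto_atTop_add_const_left _ (-s) tendsto_id).mono_left hF
  obtain ⟨p', hp'⟩ := S.exists_lim z F _ hg
  refine ⟨p', om_of_tendsto hg hp', ?_⟩
  refine tendsto_nhds_unique (((S.cont_t s).tendsto p').comp hp') (hp.congr' ?_)
  filter_upwards [hF (eventually_ge_atTop s)] with t ht
  have := S.add s (-s + t) hs (by linarith) z
  simpa using this

theorem om_shift (S : Setup le lt φ) {z p : X} (h : om φ z p) {s : ℝ} (hs : 0 ≤ s) :
    om φ (φ s z) p := by
  obtain ⟨F, hF, hp⟩ := om_iff.1 h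
  refine om_of_tendsto (F := (F : Filter ℝ)) (g := fun t => -s + t)
    ((tendsto_atTop_add_const_left _ (-s) tendsto_id).mono_left hF) (hp.congr' ?_)
  filter_upwards [hF (eventually_ge_atTop s)] with t ht
  have := S.add (-s + t) s (by linarith) hs z
  rw [← this]; congr 1; ring

theorem om_trans (S : Setup le lt φ) {z p r : X} (h : om φ z p) (h' : om φ p r) : om φ z r := by
  obtain ⟨F, hF, hp⟩ := om_iff.1 h'
  refine (om_closed (φ := φ) z).mem_of_tendsto hp ?_
  filter_upwards [hF (eventually_ge_atTop 0)] with t ht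
  exact S.om_fwd h ht

theorem om_compact (S : Setup le lt φ) (z : X) : IsCompact {p | om φ z p} := by
  refine (S.compact z).of_isClosed_subset (om_closed z) ?_
  intro p hp
  rw [mem_closure_iff_nhds]
  intro U hU
  obtain ⟨t, ht, h⟩ := om_freq hp hU 0
  exact ⟨_, h, t, ht, rfl⟩

theorem iter_le (S : Setup le lt φ) {w : X} {T : ℝ} (hT : 0 < T) (h : le w (φ T w)) (n k : ℕ) :
    le (φ (n * T) w) (φ ((n + k : ℕ) * T) w) := by
  induction k with
  | zero => exact S.refl _
  | succ k ih =>
    refine S.trans _ _ _ ih ?_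
    have h1 := S.wmono h (t := (n + k : ℕ) * T) (by positivity)
    rw [← S.add _ _ (by positivity) hT.le] at h1
    convert h1 using 2
    push_cast; ring

theorem periodic (S : Setup le lt φ) {w : X} {T : ℝ} (hT : 0 < T) (h : le w (φ T w)) :
    ∃ r, φ T r = r ∧ ∀ p, om φ w p → ∃ a, 0 ≤ a ∧ a ≤ T ∧ p = φ a r := by
  have hnT : Tendsto (fun n : ℕ => (n : ℝ) * T) atTop atTop :=
    tendsto_natCast_atTop_atTop.atTop_mul_const hT
  have key : ∀ F G : Ultrafilter ℕ, (F : Filter ℕ) ≤ atTop → (G : Filter ℕ) ≤ atTop →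
      ∀ r r', Tendsto (fun n : ℕ => φ (n * T) w) F (𝓝 r) →
      Tendsto (fun n : ℕ => φ (n * T) w) G (𝓝 r') → le r r' := by
    intro F G hF hG r r' hr hr'
    refine S.le_lim hr tendsto_const_nhds (Eventually.of_forall fun n => ?_)
    refine S.le_lim tendsto_const_nhds hr' ?_
    filter_upwards [hG (eventually_ge_atTop n)] with m hm
    obtain ⟨k, rfl⟩ := Nat.exists_eq_add_of_le hm
    exact S.iter_le hT h n k
  let F := Ultrafilter.of (atTop : Filter ℕ)
  have hF : (F : Filter ℕ) ≤ atTop := Ultrafilter.of_le _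
  obtain ⟨r, hr⟩ := S.exists_lim w F _ (hnT.mono_left hF)
  have uniq : ∀ G : Ultrafilter ℕ, (G : Filter ℕ) ≤ atTop → ∀ r',
      Tendsto (fun n : ℕ => φ (n * T) w) G (𝓝 r') → r' = r := fun G hG r' hr' =>
    S.antisymm _ _ (key G F hG hF r' r hr' hr) (key F G hF hG r r' hr hr')
  refine ⟨r, ?_, ?_⟩
  · refine uniq (F.map (fun n => n + 1)) ((tendsto_add_atTop_nat 1).mono_left hF) _ ?_
    have : Tendsto (fun n : ℕ => φ ((n + 1 : ℕ) * T) w) F (𝓝 (φ T r)) := by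
      refine (((S.cont_t T).tendsto r).comp hr).congr fun n => ?_
      have := S.add T (n * T) hT.le (by positivity) w
      simp only [Function.comp]
      rw [← this]; congr 1; push_cast; ring
    rw [Ultrafilter.coe_map, tendsto_map'_iff]
    exact this
  · intro p hp
    obtain ⟨G, hG, hGp⟩ := om_iff.1 hp
    have hfl : Tendsto (fun t : ℝ => ⌊t / T⌋₊) (G : Filter ℝ) atTop :=
      (tendsto_nat_floor_atTop.comp (tendsto_id.atTop_div_const hT)).mono_left hG
    obtain ⟨r', hr'⟩ := S.exists_lim w G (fun t => (⌊t / T⌋₊ : ℝ) * T) (hnT.comp hfl)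
    have hrr : r' = r := by
      refine uniq (G.map (fun t : ℝ => ⌊t / T⌋₊)) hfl r' ?_
      rw [Ultrafilter.coe_map, tendsto_map'_iff]
      exact hr'
    subst hrr
    have hfr : ∀ t : ℝ, 0 ≤ t → t - (⌊t / T⌋₊ : ℝ) * T ∈ Set.Icc 0 T := by
      intro t ht
      have h1 := Nat.floor_le (div_nonneg ht hT.le)
      have h2 := Nat.lt_floor_add_one (t / T)
      rw [le_div_iff₀ hT] at h1
      rw [div_lt_iff₀ hT] at h2
      constructor <;> linarith
    have h1 : ((G.map (fun t : ℝ => t - (⌊t / T⌋₊ : ℝ) * T) : Ultrafilter ℝ) : Filter ℝ) ≤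
        𝓟 (Set.Icc 0 T) := by
      rw [le_principal_iff]
      change ∀ᶠ t in (G : Filter ℝ), t - (⌊t / T⌋₊ : ℝ) * T ∈ Set.Icc 0 T
      filter_upwards [hG (eventually_ge_atTop 0)] with t ht
      exact hfr t ht
    obtain ⟨a, ha, hGa⟩ := isCompact_Icc.ultrafilter_le_nhds _ h1
    have hGa' : Tendsto (fun t : ℝ => t - (⌊t / T⌋₊ : ℝ) * T) G (𝓝 a) := hGa
    refine ⟨a, ha.1, ha.2, ?_⟩
    refine tendsto_nhds_unique hGp
      (((S.cont.tendsto (a, r')).comp (hGa'.prodMk_nhds hr')).congr' ?_)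
    filter_upwards [hG (eventually_ge_atTop 0)] with t ht
    have := S.add (t - (⌊t / T⌋₊ : ℝ) * T) ((⌊t / T⌋₊ : ℝ) * T) (hfr t ht).1 (by positivity) w
    simp only [Function.comp]
    rw [← this]; congr 1; ring

theorem fixed_iter (S : Setup le lt φ) {p : X} {T : ℝ} (hT : 0 < T) (h : φ T p = p) (n : ℕ) :
    φ (n * T) p = p := by
  induction n with
  | zero => simpa using S.zero p
  | succ n ih =>
    have := S.add (n * T) T (by positivity) hT.le p
    rw [h, ih] at this
    rw [← this]; congr 1; push_cast; ring

theorem nonorder (S : Setup le lt φ) {z p q : X} (hp : om φ z p) (hq : om φ z q)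
    (hle : le p q) : p = q := by
  by_contra hn
  have hlt := S.mono p q hle hn 1 one_pos
  have hnh := S.isOpen.mem_nhds (show (φ 1 p, φ 1 q) ∈ {q : X × X | lt q.1 q.2} from hlt)
  rw [mem_nhds_prod_iff] at hnh
  obtain ⟨U, hU, V, hV, hUV⟩ := hnh
  obtain ⟨t1, ht1, h1⟩ := om_freq (S.om_fwd hp zero_le_one) hU 0
  obtain ⟨t2, ht2, h2⟩ := om_freq (S.om_fwd hq zero_le_one) hV (t1 + 1)
  have h12 : lt (φ t1 z) (φ t2 z) := hUV (Set.mk_mem_prod h1 h2)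
  have hT : 0 < t2 - t1 := by linarith
  have hw : le (φ t1 z) (φ (t2 - t1) (φ t1 z)) := by
    rw [← S.add _ _ hT.le ht1, sub_add_cancel]; exact S.lt_le _ _ h12
  obtain ⟨r, hr, hall⟩ := S.periodic hT hw
  obtain ⟨a, ha0, haT, rfl⟩ := hall p (S.om_shift hp ht1)
  obtain ⟨b, hb0, hbT, rfl⟩ := hall q (S.om_shift hq ht1)
  set T := t2 - t1
  have hs : φ b r = φ (b + T - a) (φ a r) := by
    rw [← S.add _ _ (by linarith) ha0, sub_add_cancel, S.add _ _ hb0 hT.le, hr]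
  have hpT : φ T (φ a r) = φ a r := by
    rw [← S.add _ _ hT.le ha0, add_comm, S.add _ _ ha0 hT.le, hr]
  have hpp : om φ (φ a r) (φ a r) := by
    refine om_of_tendsto (F := (atTop : Filter ℕ)) (g := fun n : ℕ => (n : ℝ) * T)
      (tendsto_natCast_atTop_atTop.atTop_mul_const hT) ?_
    simp only [S.fixed_iter hT hpT]
    exact tendsto_const_nhds
  rcases (show 0 ≤ b + T - a by linarith).eq_or_lt with h0 | h0
  · rw [← h0, S.zero] at hs; exact hn hs.symm
  · rw [hs] at hle
    obtain ⟨r', hr', hall'⟩ := S.periodic h0 hle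
    obtain ⟨c, hc0, -, hc⟩ := hall' _ hpp
    apply hn
    rw [hs, hc, ← S.add _ _ h0.le hc0, add_comm, S.add _ _ hc0 h0.le, hr']

theorem extend (S : Setup le lt φ) {u v a b : X} {F : Ultrafilter ℝ} (hF : (F : Filter ℝ) ≤ atTop)
    (ha : Tendsto (fun t => φ t u) F (𝓝 a)) (hb : Tendsto (fun t => φ t v) F (𝓝 b))
    (hle : le a b) (hne : a ≠ b) :
    ∃ δ > 0, ∀ h, 0 ≤ h → h < δ → le a (φ h b) := by
  have hlt := S.mono a b hle hne 1 one_pos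
  have hg : Tendsto (fun q : ℝ × ℝ => (φ 1 (φ q.2 u), φ q.1 (φ 1 (φ q.2 v))))
      (𝓝 0 ×ˢ (F : Filter ℝ)) (𝓝 (φ 1 a, φ 1 b)) := by
    refine Tendsto.prodMk_nhds (((S.cont_t 1).tendsto a).comp (ha.comp tendsto_snd)) ?_
    have h1 : Tendsto (fun q : ℝ × ℝ => (q.1, φ 1 (φ q.2 v))) (𝓝 0 ×ˢ (F : Filter ℝ))
        (𝓝 (0, φ 1 b)) :=
      tendsto_fst.prodMk_nhds (((S.cont_t 1).tendsto b).comp (hb.comp tendsto_snd))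
    have h2 := (S.cont.tendsto (0, φ 1 b)).comp h1
    simp only [S.zero] at h2
    exact h2
  have hev := hg (S.isOpen.mem_nhds (show (φ 1 a, φ 1 b) ∈ {q : X × X | lt q.1 q.2} from hlt))
  obtain ⟨P, hP, Q, hQ, hPQ⟩ := eventually_prod_iff.1 (show ∀ᶠ q in _, lt _ _ from hev)
  obtain ⟨δ, hδ, hball⟩ := Metric.eventually_nhds_iff.1 hP
  obtain ⟨t, htQ, ht0⟩ := (hQ.and (hF (eventually_ge_atTop 0))).exists
  refine ⟨δ, hδ, fun h h0 hh => ?_⟩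
  have hl : le (φ 1 (φ t u)) (φ h (φ 1 (φ t v))) :=
    S.lt_le _ _ (hPQ (hball (by simpa [abs_of_nonneg h0] using hh)) htQ)
  refine S.le_lim ha (((S.cont_t h).tendsto b).comp hb) ?_
  filter_upwards [hF (eventually_ge_atTop (t + 1))] with τ hτ
  have h3 := S.wmono hl (t := τ - (t + 1)) (by linarith)
  have e1 : φ (τ - (t + 1)) (φ 1 (φ t u)) = φ τ u := by
    rw [← S.add _ _ zero_le_one ht0, ← S.add _ _ (by linarith) (by linarith)]; congr 1; ring
  have e2 : φ (τ - (t + 1)) (φ h (φ 1 (φ t v))) = φ h (φ τ v) := by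
    rw [← S.add _ _ zero_le_one ht0, ← S.add _ _ h0 (by linarith),
      ← S.add _ _ (by linarith) (by linarith), ← S.add _ _ h0 (by linarith)]; congr 1; ring
  rwa [e1, e2] at h3

/-- One half of the colimiting principle. -/
theorem colimit_half (S : Setup le lt φ) {u v p : X} {F : Ultrafilter ℝ}
    (hF : (F : Filter ℝ) ≤ atTop)
    (ha : Tendsto (fun t => φ t u) F (𝓝 p)) (hb : Tendsto (fun t => φ t v) F (𝓝 p))
    (hle : le u v) (hne : u ≠ v) :
    ∃ δ > 0, ∀ h, 0 ≤ h → h < δ → le p (φ h p) := by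
  have hlt := S.mono u v hle hne 1 one_pos
  have hc : Continuous fun h : ℝ => (φ 1 u, φ h (φ 1 v)) :=
    continuous_const.prodMk (S.cont_x _)
  have hev := (S.isOpen.preimage hc).mem_nhds (x := 0)
    (show lt (φ 1 u) (φ 0 (φ 1 v)) by rwa [S.zero])
  obtain ⟨δ, hδ, hball⟩ := Metric.mem_nhds_iff.1 hev
  refine ⟨δ, hδ, fun h h0 hh => ?_⟩
  have hl : le (φ 1 u) (φ h (φ 1 v)) := S.lt_le _ _
    (hball (show h ∈ Metric.ball 0 δ by simpa [abs_of_nonneg h0] using hh))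
  refine S.le_lim ha (((S.cont_t h).tendsto p).comp hb) ?_
  filter_upwards [hF (eventually_ge_atTop 1)] with τ hτ
  have h3 := S.wmono hl (t := τ - 1) (by linarith)
  have e1 : φ (τ - 1) (φ 1 u) = φ τ u := by
    rw [← S.add _ _ (by linarith) (by linarith)]; congr 1; ring
  have e2 : φ (τ - 1) (φ h (φ 1 v)) = φ h (φ τ v) := by
    rw [← S.add _ _ h0 (by linarith),
      ← S.add _ _ (by linarith) (by linarith), ← S.add _ _ h0 (by linarith)]; congr 1; ring
  rwa [e1, e2] at h3

theorem colimit (S : Setup le lt φ) {u v p : X} {F : Ultrafilter ℝ}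
    (hF : (F : Filter ℝ) ≤ atTop)
    (ha : Tendsto (fun t => φ t u) F (𝓝 p)) (hb : Tendsto (fun t => φ t v) F (𝓝 p))
    (hle : le u v) (hne : u ≠ v) (t : ℝ) (ht : 0 ≤ t) : φ t p = p := by
  obtain ⟨δ, hδ, h1⟩ := S.colimit_half hF ha hb hle hne
  obtain ⟨δ', hδ', h2⟩ := S.dual.colimit_half hF hb ha hle hne.symm
  have hfix : ∀ h, 0 ≤ h → h < min δ δ' → φ h p = p := fun h h0 hh =>
    S.antisymm _ _ (h2 h h0 (hh.trans_le (min_le_right _ _)))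
      (h1 h h0 (hh.trans_le (min_le_left _ _)))
  have hm : 0 < min δ δ' := lt_min hδ hδ'
  rcases ht.eq_or_lt with rfl | ht
  · exact S.zero p
  obtain ⟨n, hn⟩ := exists_nat_gt (t / min δ δ')
  have hn0 : (0 : ℝ) < n := lt_of_le_of_lt (by positivity) hn
  have h3 := S.fixed_iter (T := t / n) (by positivity) (hfix (t / n) (by positivity) (by
    rw [div_lt_iff₀ hm] at hn
    rw [div_lt_iff₀ hn0]; linarith)) n
  rwa [mul_div_cancel₀ _ hn0.ne'] at h3

theorem absorb (S : Setup le lt φ) {u v x : X} (hx : om φ u x)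
    (h : ∀ z, om φ v z → le x z ∧ x ≠ z) :
    ∀ y z, om φ u y → om φ v z → le y z ∧ y ≠ z := by
  have hlt : ∀ w, om φ v w → lt (φ 1 x) w := by
    intro w hw
    obtain ⟨w', hw', rfl⟩ := S.om_bwd hw zero_le_one
    exact S.mono _ _ (h w' hw').1 (h w' hw').2 1 one_pos
  obtain ⟨U, V, hU, hV, hxU, hKV, hUV⟩ := generalized_tube_lemma (isCompact_singleton (x := φ 1 x))
    (S.om_compact v) S.isOpen (by
      rintro ⟨a, w⟩ ⟨ha, hw⟩
      rw [Set.mem_singleton_iff] at ha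
      simp only at ha
      subst ha
      exact hlt w hw)
  obtain ⟨t1, ht1, hu⟩ := om_freq (S.om_fwd hx zero_le_one)
    (hU.mem_nhds (hxU (Set.mem_singleton _))) 0
  have hle : ∀ y z, om φ u y → om φ v z → le y z := by
    intro y z hy hz
    obtain ⟨F, hF, hFy⟩ := om_iff.1 hy
    refine S.le_lim hFy tendsto_const_nhds ?_
    filter_upwards [hF (eventually_ge_atTop t1)] with t ht
    obtain ⟨z', hz', rfl⟩ := S.om_bwd hz (s := t - t1) (by linarith)
    have h1 : le (φ t1 u) z' := S.lt_le _ _ (hUV (Set.mk_mem_prod hu (hKV hz')))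
    have h2 := S.wmono h1 (t := t - t1) (by linarith)
    rwa [← S.add _ _ (by linarith) ht1, sub_add_cancel] at h2
  intro y z hy hz
  refine ⟨hle y z hy hz, ?_⟩
  rintro rfl
  exact (h y hz).2 (S.nonorder hx hy (h y hz).1)

theorem separation (S : Setup le lt φ) {u v a b : X} {F : Ultrafilter ℝ}
    (hF : (F : Filter ℝ) ≤ atTop)
    (ha : Tendsto (fun t => φ t u) F (𝓝 a)) (hb : Tendsto (fun t => φ t v) F (𝓝 b))
    (hle : le a b) (hne : a ≠ b) :
    ∀ y z, om φ u y → om φ v z → lt y z := by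
  have hau : om φ u a := om_iff.2 ⟨F, hF, ha⟩
  have hbv : om φ v b := om_iff.2 ⟨F, hF, hb⟩
  have hav : ¬ om φ v a := fun h => hne (S.nonorder h hbv hle)
  have hall : ∀ s, 0 ≤ s → le a (φ s b) := by
    intro s hs
    have hcl : IsClosed ({s : ℝ | le a (φ s b)} ∩ Set.Icc 0 s) :=
      (S.closed.preimage (continuous_const.prodMk (S.cont_x b))).inter isClosed_Icc
    refine hcl.Icc_subset_of_forall_mem_nhdsWithin ?_ ?_ (Set.right_mem_Icc.2 hs)
    · change le a (φ 0 b); rwa [S.zero]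
    · rintro c ⟨hc, hc0, hcs⟩
      have hbc : Tendsto (fun t => φ t (φ c v)) F (𝓝 (φ c b)) := by
        refine (((S.cont_t c).tendsto b).comp hb).congr' ?_
        filter_upwards [hF (eventually_ge_atTop 0)] with t ht
        simp only [Function.comp]
        rw [← S.add _ _ hc0 ht, ← S.add _ _ ht hc0, add_comm]
      obtain ⟨δ, hδ, hd⟩ := S.extend hF ha hbc hc
        (fun h => hav (by rw [h]; exact S.om_fwd hbv hc0))
      filter_upwards [Ioo_mem_nhdsGT (show c < c + δ by linarith)] with t ht
      have := hd (t - c) (by linarith [ht.1]) (by linarith [ht.2])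
      rwa [← S.add _ _ (by linarith [ht.1]) hc0, sub_add_cancel] at this
  have h1 : ∀ z, om φ b z → le a z ∧ a ≠ z := by
    intro z hz
    refine ⟨?_, fun h => hav (by rw [h]; exact S.om_trans hbv hz)⟩
    obtain ⟨G, hG, hGz⟩ := om_iff.1 hz
    refine S.le_lim tendsto_const_nhds hGz ?_
    filter_upwards [hG (eventually_ge_atTop 0)] with t ht using hall t ht
  have h2 := S.absorb hau h1
  obtain ⟨c, hc⟩ := S.om_exists b
  have h3 := S.dual.absorb (u := v) (v := u) (S.om_trans hbv hc)
    (fun z hz => ⟨(h2 z c hz hc).1, (h2 z c hz hc).2.symm⟩)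
  intro y z hy hz
  obtain ⟨y', hy', rfl⟩ := S.om_bwd hy zero_le_one
  obtain ⟨z', hz', rfl⟩ := S.om_bwd hz zero_le_one
  have h4 := h3 z' y' hz' hy'
  exact S.mono _ _ h4.1 h4.2.symm 1 one_pos

theorem dichotomy (S : Setup le lt φ) {x y : X} (hle : le x y) (hne : x ≠ y) :
    (∀ p q, om φ x p → om φ y q → lt p q) ∨
      ((∀ p, om φ x p ↔ om φ y p) ∧ ∀ e, om φ x e → ∀ t : ℝ, 0 ≤ t → φ t e = e) := by
  by_cases hex : ∃ (F : Ultrafilter ℝ) (a b : X), (F : Filter ℝ) ≤ atTop ∧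
      Tendsto (fun t => φ t x) F (𝓝 a) ∧ Tendsto (fun t => φ t y) F (𝓝 b) ∧ a ≠ b
  · obtain ⟨F, a, b, hF, ha, hb, hab⟩ := hex
    left
    refine S.separation hF ha hb (S.le_lim ha hb ?_) hab
    filter_upwards [hF (eventually_ge_atTop 0)] with t ht using S.wmono hle ht
  · right
    have hall : ∀ (F : Ultrafilter ℝ) (a b : X), (F : Filter ℝ) ≤ atTop →
      Tendsto (fun t => φ t x) F (𝓝 a) → Tendsto (fun t => φ t y) F (𝓝 b) → a = b := by
      intro F a b hF ha hb
      by_contra hab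
      exact hex ⟨F, a, b, hF, ha, hb, hab⟩
    refine ⟨fun p => ⟨fun hp => ?_, fun hp => ?_⟩, fun p hp t ht => ?_⟩
    · obtain ⟨F, hF, ha⟩ := om_iff.1 hp
      obtain ⟨b, hb⟩ := S.exists_lim y F id hF
      obtain rfl := hall F p b hF ha hb
      exact om_iff.2 ⟨F, hF, hb⟩
    · obtain ⟨F, hF, hb⟩ := om_iff.1 hp
      obtain ⟨a, ha⟩ := S.exists_lim x F id hF
      obtain rfl := hall F a p hF ha hb
      exact om_iff.2 ⟨F, hF, ha⟩
    · obtain ⟨F, hF, ha⟩ := om_iff.1 hp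
      obtain ⟨b, hb⟩ := S.exists_lim y F id hF
      obtain rfl := hall F p b hF ha hb
      exact S.colimit hF ha hb hle hne t ht

end Setup

theorem om_iff_inter {z p : X} : om φ z p ↔
    p ∈ ⋂ (s : ℝ) (_ : 0 ≤ s), closure {w | ∃ t : ℝ, s ≤ t ∧ φ t z = w} := by
  simp only [Set.mem_iInter]
  constructor
  · intro h s _
    rw [mem_closure_iff_nhds]
    intro U hU
    obtain ⟨t, ht, h'⟩ := om_freq h hU s
    exact ⟨_, h', t, ht, rfl⟩
  · intro h
    refine mapClusterPt_iff_frequently.2 fun U hU => frequently_atTop.2 fun s => ?_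
    obtain ⟨w, hw, t, ht, rfl⟩ := mem_closure_iff_nhds.1 (h (max s 0) (le_max_right _ _)) U hU
    exact ⟨t, (le_max_left _ _).trans ht, hw⟩

end LSD

/-- Limit set dichotomy (weak form): for `x ≤ y`, `x ≠ y`, either
`ω(x) ≪ ω(y)` pointwise, or `ω(x) = ω(y)` and all its points are equilibria. -/
theorem limit_set_dichotomy {X : Type*} [MetricSpace X] [PartialOrder X]
    (lt : X → X → Prop)
    (hclosed : IsClosed {q : X × X | q.1 ≤ q.2})
    (hlt_le : ∀ a b, lt a b → a ≤ b)
    (hlt_ne : ∀ a b, lt a b → a ≠ b)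
    (hopen : ∀ a b, lt a b → ∃ U V : Set X, IsOpen U ∧ IsOpen V ∧ a ∈ U ∧ b ∈ V ∧
      ∀ u ∈ U, ∀ v ∈ V, lt u v)
    (hquasi : ∀ (a b : X) (u v : ℕ → X), (∀ n, lt (u n) (v n)) →
      Tendsto u atTop (𝓝 a) → Tendsto v atTop (𝓝 b) → a ≤ b)
    (φ : ℝ → X → X)
    (hφc : Continuous fun q : ℝ × X => φ q.1 q.2)
    (hφ0 : ∀ x, φ 0 x = x)
    (hφadd : ∀ s t : ℝ, 0 ≤ s → 0 ≤ t → ∀ x, φ (s + t) x = φ s (φ t x))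
    (hmono : ∀ x y : X, x ≤ y → x ≠ y → ∀ t : ℝ, 0 < t → lt (φ t x) (φ t y))
    (hcompact : ∀ z : X, IsCompact (closure {w | ∃ t : ℝ, 0 ≤ t ∧ φ t z = w}))
    (ω : X → Set X)
    (hω : ∀ z, ω z = ⋂ (s : ℝ) (_ : 0 ≤ s), closure {w | ∃ t : ℝ, s ≤ t ∧ φ t z = w})
    (x y : X) (hxy : x ≤ y) (hne : x ≠ y) :
    (∀ p ∈ ω x, ∀ q ∈ ω y, lt p q) ∨
      (ω x = ω y ∧ ∀ e ∈ ω x, ∀ t : ℝ, 0 ≤ t → φ t e = e) := by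
  have S : LSD.Setup (fun a b : X => a ≤ b) lt φ :=
    { refl := fun a => le_refl a
      antisymm := fun a b h1 h2 => le_antisymm h1 h2
      trans := fun a b c h1 h2 => le_trans h1 h2
      closed := hclosed
      lt_le := hlt_le
      isOpen := by
        rw [isOpen_iff_mem_nhds]
        rintro ⟨a, b⟩ hab
        obtain ⟨U, V, hU, hV, ha, hb, h⟩ := hopen a b hab
        filter_upwards [prod_mem_nhds (hU.mem_nhds ha) (hV.mem_nhds hb)] with q hq
        exact h _ hq.1 _ hq.2
      cont := hφc
      zero := hφ0
      add := hφadd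
      mono := hmono
      compact := hcompact }
  have hom : ∀ z p, p ∈ ω z ↔ LSD.om φ z p := fun z p => by
    rw [hω]; exact LSD.om_iff_inter.symm
  rcases S.dichotomy hxy hne with h | ⟨h1, h2⟩
  · exact Or.inl fun p hp q hq => h p q ((hom _ _).1 hp) ((hom _ _).1 hq)
  · refine Or.inr ⟨Set.ext fun p => ?_, fun e he => h2 e ((hom _ _).1 he)⟩
    rw [hom, hom]; exact h1 p
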